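/- arXiv:1905.02160 — 2 statements merged into one kernel-verified Lean document; each statement's English description precedes it below -/
import Mathlib

section
/- Let 𝒰 be a cofinite subsymmetric ultrafilter on FIN_{±k} with 𝒰 + (−T)^j 𝒰 = (−T)^j 𝒰 + 𝒰 = 𝒰 for all j ≤ k. For every r ∈ ℕ, r ≥ 1, and every Souslin measurable (with respect to the metrizable topology) colouring c : FIN_{±k}^[∞] → {0, …, r−1}, there exist i < r and a 𝒰-tree U with stem ∅ such that [U] ⊆ c⁻¹{i}. -/
open Function Set

/-- `p` is an element of `FIN_{±k}`: finitely supported, values in `{0, ±1, …, ±k}`,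
attaining one of the values `±k`. -/
def IsFin (k : ℕ) (p : ℕ → ℤ) : Prop :=
  (Function.support p).Finite ∧ (∀ n, |p n| ≤ (k : ℤ)) ∧ (∃ n, |p n| = (k : ℤ))

/-- `p < q` in the block ordering: every point of `supp p` precedes every point of `supp q`. -/
def BlockLt (p q : ℕ → ℤ) : Prop :=
  ∀ m n : ℕ, p m ≠ 0 → q n ≠ 0 → m < n

/-- The tetris operation `T`. -/
def tetris (p : ℕ → ℤ) : ℕ → ℤ := fun n =>
  if 0 < p n then p n - 1 else if p n < 0 then p n + 1 else 0

/-- The sign-flipped tetris operation `-T`. -/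
def negT (p : ℕ → ℤ) : ℕ → ℤ := -(tetris p)

/-- The weak tetris operation `S`. -/
def Sop (p : ℕ → ℤ) : ℕ → ℤ := fun n => if |p n| = 1 then 0 else p n

/-- `‖p‖ ≤ c` for the `ℓ∞` norm. -/
def normLe (p : ℕ → ℤ) (c : ℕ) : Prop := ∀ n, |p n| ≤ (c : ℤ)

/-- `(A)_c`, the `c`-fattening of `A`. -/
def approx (c : ℕ) (A : Set (ℕ → ℤ)) : Set (ℕ → ℤ) :=
  {p | ∃ q ∈ A, normLe (p - q) c}

/-- `P` is an infinite block sequence in `FIN_{±k}`. -/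
def IsBlockSeq (k : ℕ) (P : ℕ → ℕ → ℤ) : Prop :=
  (∀ n, IsFin k (P n)) ∧ ∀ m n : ℕ, m < n → BlockLt (P m) (P n)

/-- `t` is a finite block sequence in `FIN_{±k}` (coded as a list). -/
def IsFinBlockSeq (k : ℕ) (t : List (ℕ → ℤ)) : Prop :=
  (∀ p ∈ t, IsFin k p) ∧ t.Pairwise BlockLt

/-- `q ∈ ⟨P⟩_{±k}`: `q = ε₀T^{j₀}(p_{n₀}) + ⋯ + ε_m T^{j_m}(p_{n_m})` with `n₀ < ⋯ < n_m`,
`εᵢ ∈ {±1}`, `jᵢ < k` and `min jᵢ = 0`. -/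
def InSpanPM (k : ℕ) (P : ℕ → ℕ → ℤ) (q : ℕ → ℤ) : Prop :=
  ∃ (m : ℕ) (n : Fin (m + 1) → ℕ) (ε : Fin (m + 1) → ℤ) (j : Fin (m + 1) → ℕ),
    StrictMono n ∧ (∀ i, ε i = 1 ∨ ε i = -1) ∧ (∀ i, j i < k) ∧ (∃ i, j i = 0) ∧
    q = ∑ i, ε i • tetris^[j i] (P (n i))

/-- `q ∈ ⟨P⟩_{(−T)}`. -/
def InSpanNegT (k : ℕ) (P : ℕ → ℕ → ℤ) (q : ℕ → ℤ) : Prop :=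
  ∃ (m : ℕ) (n : Fin (m + 1) → ℕ) (j : Fin (m + 1) → ℕ),
    StrictMono n ∧ (∀ i, j i < k) ∧ (∃ i, j i = 0) ∧
    q = ∑ i, negT^[j i] (P (n i))

/-- `q ∈ ⟨p_a, …, p_b⟩_{(−T)}`. -/
def InSpanNegTRange (k : ℕ) (P : ℕ → ℕ → ℤ) (a b : ℕ) (q : ℕ → ℤ) : Prop :=
  ∃ (m : ℕ) (n : Fin (m + 1) → ℕ) (j : Fin (m + 1) → ℕ),
    StrictMono n ∧ (∀ i, a ≤ n i ∧ n i ≤ b) ∧ (∀ i, j i < k) ∧ (∃ i, j i = 0) ∧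
    q = ∑ i, negT^[j i] (P (n i))

/-- A cofinite ultrafilter on `FIN_{±k}` (coded as an ultrafilter on `ℕ → ℤ`
concentrating on `FIN_{±k}`). -/
def IsCofiniteUF (k : ℕ) (𝒰 : Ultrafilter (ℕ → ℤ)) : Prop :=
  {p | IsFin k p} ∈ 𝒰 ∧ ∀ m : ℕ, {p : ℕ → ℤ | ∀ n < m, p n = 0} ∈ 𝒰

/-- `A ∈ 𝒰 + 𝒱`. -/
def SumMem (𝒰 𝒱 : Ultrafilter (ℕ → ℤ)) (A : Set (ℕ → ℤ)) : Prop :=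
  {p | {q | BlockLt p q ∧ p + q ∈ A} ∈ 𝒱} ∈ 𝒰

/-- `𝒰` is subsymmetric: `A ∈ 𝒰` implies `−(A)₁ ∈ 𝒰`. -/
def IsSubsymmetric (𝒰 : Ultrafilter (ℕ → ℤ)) : Prop :=
  ∀ A ∈ 𝒰, {p : ℕ → ℤ | -p ∈ approx 1 A} ∈ 𝒰

/-- `𝒰 + (−T)^j 𝒰 = (−T)^j 𝒰 + 𝒰 = 𝒰` for all `j ≤ k`. -/
def IsIdempotentUF (k : ℕ) (𝒰 : Ultrafilter (ℕ → ℤ)) : Prop :=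
  ∀ j ≤ k, ∀ A : Set (ℕ → ℤ),
    (SumMem 𝒰 (Ultrafilter.map (negT^[j]) 𝒰) A ↔ A ∈ 𝒰) ∧
    (SumMem (Ultrafilter.map (negT^[j]) 𝒰) 𝒰 A ↔ A ∈ 𝒰)

/-- A cofinite subsymmetric ultrafilter on `FIN_{±k}` idempotent with respect to
all the maps `(−T)^j`, `j ≤ k`. -/
def IsGowersUF (k : ℕ) (𝒰 : Ultrafilter (ℕ → ℤ)) : Prop :=
  IsCofiniteUF k 𝒰 ∧ IsSubsymmetric 𝒰 ∧ IsIdempotentUF k 𝒰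

/-- A `𝒰`-tree on `FIN_{±k}` with stem `s`. -/
structure IsUTree (k : ℕ) (𝒰 : Ultrafilter (ℕ → ℤ)) (U : Set (List (ℕ → ℤ)))
    (s : List (ℕ → ℤ)) : Prop where
  blocks : ∀ t ∈ U, IsFinBlockSeq k t
  prefixClosed : ∀ t ∈ U, ∀ t' : List (ℕ → ℤ), t' <+: t → t' ∈ U
  stemMem : s ∈ U
  stemComparable : ∀ t ∈ U, s <+: t ∨ t <+: s
  branch : ∀ t ∈ U, s <+: t → {p | t ++ [p] ∈ U} ∈ 𝒰

/-- `[U]`, the set of infinite branches of a tree of finite block sequences. -/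
def Branches (U : Set (List (ℕ → ℤ))) : Set (ℕ → ℕ → ℤ) :=
  {P | ∀ n : ℕ, (List.ofFn fun i : Fin n => P i.1) ∈ U}

/-- The space `FIN_{±k}^[∞]` of infinite block sequences. -/
def BlockSeq (k : ℕ) : Type := {P : ℕ → ℕ → ℤ // IsBlockSeq k P}

/-- The metrizable topology on `FIN_{±k}^[∞]`, generated by the basic sets `[s]`. -/
instance BlockSeq.topology (k : ℕ) : TopologicalSpace (BlockSeq k) :=
  TopologicalSpace.generateFrom
    {O | ∃ s : List (ℕ → ℤ),
      O = {P : BlockSeq k | ∀ i : Fin s.length, P.1 i.1 = s.get i}}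

/-- The Souslin operation applied to a Souslin scheme. -/
def SouslinOp {α : Type*} (F : List ℕ → Set α) : Set α :=
  ⋃ x : ℕ → ℕ, ⋂ n : ℕ, F (List.ofFn fun i : Fin n => x i.1)

/-- `A` is Souslin measurable: it belongs to every field of sets containing the open
sets and closed under the Souslin operation. -/
def SouslinMeasurable {α : Type*} [TopologicalSpace α] (A : Set α) : Prop :=
  ∀ 𝓕 : Set (Set α),
    (∀ O : Set α, IsOpen O → O ∈ 𝓕) →
    (∀ B ∈ 𝓕, Bᶜ ∈ 𝓕) →
    (∀ B ∈ 𝓕, ∀ C ∈ 𝓕, B ∪ C ∈ 𝓕) →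
    (∀ F : List ℕ → Set α, (∀ s, F s ∈ 𝓕) → SouslinOp F ∈ 𝓕) →
    A ∈ 𝓕

/-- The map `Φ_m : FIN_{±2m} → FIN_{±m}` (its defining formula does not depend on `m`). -/
def Phi (p : ℕ → ℤ) : ℕ → ℤ := fun n =>
  if p n % 2 = 0 then p n / 2
  else if 0 < p n then (p n - 1) / 2
  else (p n + 1) / 2

/-- `Ψ = Φ_k ∘ Φ_{2k} : FIN_{±4k} → FIN_{±k}`. -/
def Psi (p : ℕ → ℤ) : ℕ → ℤ := Phi (Phi p)

/-!
Consider trees in which every node has a `𝒰`-large set of successors. For a fixed stem, the sets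
containing all branches of such a tree form a filter, and `B` is Ramsey when each of these filters
decides `B`. Since `𝒰` is an ultrafilter, membership of `B` in the filter at a node `t`, and equally
non-membership, passes to almost every successor of `t`; hence along almost every branch of any stem
the answer never changes. The points along which `B` eventually belongs to the filters thus form a
Ramsey set, which is a largest Ramsey subset of `B` modulo the null sets. Consequently the Ramsey
sets form a σ-algebra with measurable envelopes modulo a σ-ideal, so by Marczewski's argument they
are closed under the Souslin operation. Open sets are Ramsey, so all Souslin measurable sets are,
and the filter with stem `∅` contains one of the finitely many colour classes. A member of that
filter contains the branches of a `𝒰`-tree, because cofiniteness lets every finite block sequence be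
extended by almost every `p`.
-/

section InitialSegment

variable {α : Type*}

/-- The list of the first `n` terms of `x`. -/
def initialSegment (x : ℕ → α) (n : ℕ) : List α := List.ofFn fun i : Fin n => x i

@[simp]
theorem initialSegment_zero (x : ℕ → α) : initialSegment x 0 = [] := by
  simp [initialSegment]

@[simp]
theorem length_initialSegment (x : ℕ → α) (n : ℕ) : (initialSegment x n).length = n :=
  List.length_ofFn

theorem initialSegment_succ (x : ℕ → α) (n : ℕ) :
    initialSegment x (n + 1) = initialSegment x n ++ [x n] :=
  (List.ofFn_succ' _).trans (List.concat_eq_append ..)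

theorem initialSegment_eq_iff {x y : ℕ → α} {n : ℕ} :
    initialSegment x n = initialSegment y n ↔ ∀ i < n, x i = y i := by
  rw [initialSegment, initialSegment, List.ofFn_inj, funext_iff, Fin.forall_iff]

theorem take_initialSegment (x : ℕ → α) {m n : ℕ} (h : m ≤ n) :
    (initialSegment x n).take m = initialSegment x m :=
  (Fin.ofFn_take_eq_take_ofFn h _).symm

theorem exists_forall_initialSegment {p : List α → Prop} (h_nil : p [])
    (h_append : ∀ t, p t → ∃ a, p (t ++ [a])) :
    ∃ x : ℕ → α, ∀ n, p (initialSegment x n) := by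
  choose next h_next using h_append
  let node : ℕ → {t // p t} :=
    Nat.rec ⟨[], h_nil⟩ fun _ t => ⟨t.1 ++ [next t.1 t.2], h_next t.1 t.2⟩
  have h_node (n : ℕ) : initialSegment (fun n => next (node n).1 (node n).2) n = (node n).1 := by
    induction n with
    | zero => exact initialSegment_zero _
    | succ n ih => rw [initialSegment_succ, ih]
  exact ⟨_, fun n => (h_node n).symm ▸ (node n).2⟩

theorem exists_initialSegment_mem_of_generateOpen {X : Type*} {e : X → ℕ → α} {O : Set X}
    (hO : TopologicalSpace.GenerateOpen
      {O | ∃ s : List α, O = {P | ∀ i : Fin s.length, e P i = s.get i}} O) {P : X} (hP : P ∈ O) :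
    ∃ n, ∀ Q, initialSegment (e Q) n = initialSegment (e P) n → Q ∈ O := by
  simp only [initialSegment_eq_iff]
  induction hO with
  | basic O hO =>
    obtain ⟨s, rfl⟩ := hO
    exact ⟨s.length, fun Q hQ i => (hQ i i.2).trans (hP i)⟩
  | univ => exact ⟨0, fun _ _ => mem_univ _⟩
  | inter A B _ _ ihA ihB =>
    obtain ⟨m, hm⟩ := ihA hP.1
    obtain ⟨n, hn⟩ := ihB hP.2
    exact ⟨max m n, fun Q hQ => ⟨hm Q fun i hi => hQ i (lt_max_of_lt_left hi),
      hn Q fun i hi => hQ i (lt_max_of_lt_right hi)⟩⟩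
  | sUnion S _ ih =>
    obtain ⟨A, hA, hPA⟩ := hP
    obtain ⟨n, hn⟩ := ih A hA hPA
    exact ⟨n, fun Q hQ => ⟨A, hA, hn Q hQ⟩⟩

end InitialSegment

section SouslinOperation

open Filter

variable {X : Type*}

/-- `E` is a measurable envelope of `A` modulo the ideal dual to `l`: a smallest measurable set
almost containing `A`. -/
structure IsMeasurableEnvelope [MeasurableSpace X] (l : Filter X) (A E : Set X) : Prop where
  measurableSet : MeasurableSet E
  le : A ≤ᶠ[l] E
  le_of_le : ∀ Z, MeasurableSet Z → A ≤ᶠ[l] Z → E ≤ᶠ[l] Z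

/-- The part of `SouslinOp F` contributed by the sequences extending `σ`. -/
def souslinPart (F : List ℕ → Set X) (σ : List ℕ) : Set X :=
  {P | ∃ x : ℕ → ℕ, initialSegment x σ.length = σ ∧ ∀ n, P ∈ F (initialSegment x n)}

theorem souslinPart_nil (F : List ℕ → Set X) : souslinPart F [] = SouslinOp F := by
  ext P
  simp [souslinPart, SouslinOp, initialSegment]

theorem souslinPart_subset (F : List ℕ → Set X) (σ : List ℕ) : souslinPart F σ ⊆ F σ := by
  rintro P ⟨x, hx, hP⟩
  exact hx ▸ hP σ.length

theorem souslinPart_subset_iUnion (F : List ℕ → Set X) (σ : List ℕ) :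
    souslinPart F σ ⊆ ⋃ n, souslinPart F (σ ++ [n]) := by
  rintro P ⟨x, hx, hP⟩
  refine mem_iUnion.2 ⟨x σ.length, x, ?_, hP⟩
  rw [List.length_append, List.length_singleton, initialSegment_succ, hx]

/-- Marczewski's theorem. Almost every point of the envelope of a part of the Souslin set lies in
the envelope of some one-step refinement of that part, so it can be followed down a full branch of
the scheme. -/
theorem eventuallyMeasurableSet_souslinOp [m : MeasurableSpace X] {l : Filter X}
    [CountableInterFilter l] (h_envelope : ∀ A, ∃ E, IsMeasurableEnvelope l A E)
    {F : List ℕ → Set X} (hF : ∀ σ, MeasurableSet (F σ)) :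
    EventuallyMeasurableSet m l (SouslinOp F) := by
  choose E hE using fun σ => h_envelope (souslinPart F σ)
  have h_scheme (σ : List ℕ) : E σ ≤ᶠ[l] F σ :=
    (hE σ).le_of_le _ (hF σ) (souslinPart_subset F σ).eventuallyLE
  have h_refine (σ : List ℕ) : E σ ≤ᶠ[l] ⋃ n, E (σ ++ [n]) :=
    (hE σ).le_of_le _ (.iUnion fun n => (hE _).measurableSet) <|
      (souslinPart_subset_iUnion F σ).eventuallyLE.trans <|
        .countable_iUnion fun n => (hE (σ ++ [n])).le
  have h_branch : E [] ≤ᶠ[l] SouslinOp F := by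
    filter_upwards [eventually_countable_forall.2 h_scheme, eventually_countable_forall.2 h_refine]
      with P h_scheme h_refine hP
    obtain ⟨x, hx⟩ := exists_forall_initialSegment (p := fun σ => P ∈ E σ) hP
      fun σ hσ => mem_iUnion.1 (h_refine σ hσ)
    exact mem_iUnion.2 ⟨x, mem_iInter.2 fun n => h_scheme _ (hx n)⟩
  exact ⟨E [], (hE []).measurableSet, (souslinPart_nil F ▸ (hE []).le).antisymm h_branch⟩

end SouslinOperation

section TreeFilter

open Filter

variable {α X : Type*}

/-- The branches through `s` of the tree in which a node `t` extending `s` has successor set `g t`.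
A branch is given by a point `P` of `X` coding the sequence `e P`. -/
def branchesThrough (e : X → ℕ → α) (g : List α → Set α) (s : List α) : Set X :=
  {P | initialSegment (e P) s.length = s ∧ ∀ n ≥ s.length, e P n ∈ g (initialSegment (e P) n)}

section Branches

variable {e : X → ℕ → α} {g h : List α → Set α} {s : List α} {P : X}

theorem branchesThrough_mono (hgh : ∀ t, g t ⊆ h t) :
    branchesThrough e g s ⊆ branchesThrough e h s :=
  fun _ hP => ⟨hP.1, fun n hn => hgh _ (hP.2 n hn)⟩

theorem mem_branchesThrough_initialSegment {n : ℕ} :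
    P ∈ branchesThrough e g (initialSegment (e P) n) ↔
      ∀ m ≥ n, e P m ∈ g (initialSegment (e P) m) := by
  simp [branchesThrough]

theorem mem_branchesThrough_iff_append :
    P ∈ branchesThrough e g s ↔
      e P s.length ∈ g s ∧ P ∈ branchesThrough e g (s ++ [e P s.length]) := by
  simp only [branchesThrough, mem_ofPred_eq, List.length_append, List.length_singleton,
    initialSegment_succ, List.append_cancel_right_eq]
  constructor
  · rintro ⟨hs, hP⟩
    have h_mem := hP s.length le_rfl
    rw [hs] at h_mem
    exact ⟨h_mem, hs, fun n hn => hP n (Nat.le_of_succ_le hn)⟩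
  · rintro ⟨h_mem, hs, hP⟩
    refine ⟨hs, fun n hn => ?_⟩
    rcases hn.eq_or_lt with rfl | hn
    · rwa [hs]
    · exact hP n hn

theorem branchesThrough_append_subset {a : α} (ha : a ∈ g s) :
    branchesThrough e g (s ++ [a]) ⊆ branchesThrough e g s := by
  intro P hP
  have hPa : e P s.length = a := by
    have := hP.1
    rw [List.length_append, List.length_singleton, initialSegment_succ] at this
    exact (List.append_singleton_inj.1 this).2
  exact mem_branchesThrough_iff_append.2 ⟨hPa ▸ ha, hPa ▸ hP⟩

end Branches

variable (𝒰 : List α → Ultrafilter α) (e : X → ℕ → α)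

/-- The filter on `X` generated by the sets of branches of trees with stem `s` in which the
successors of every node `t` above `s` form a set of `𝒰 t`. -/
def treeFilter (s : List α) : Filter X where
  sets := {B | ∃ g : List α → Set α, (∀ t, g t ∈ 𝒰 t) ∧ branchesThrough e g s ⊆ B}
  univ_sets := ⟨fun _ => univ, fun _ => univ_mem, subset_univ _⟩
  sets_of_superset := fun ⟨g, hg, hB⟩ hBC => ⟨g, hg, hB.trans hBC⟩
  inter_sets := by
    rintro B C ⟨g, hg, hB⟩ ⟨h, hh, hC⟩
    exact ⟨fun t => g t ∩ h t, fun t => inter_mem (hg t) (hh t), subset_inter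
      ((branchesThrough_mono fun _ => inter_subset_left).trans hB)
      ((branchesThrough_mono fun _ => inter_subset_right).trans hC)⟩

variable {𝒰 e} {s : List α} {B : Set X}

theorem mem_treeFilter :
    B ∈ treeFilter 𝒰 e s ↔
      ∃ g : List α → Set α, (∀ t, g t ∈ 𝒰 t) ∧ branchesThrough e g s ⊆ B :=
  Iff.rfl

theorem mem_treeFilter_iff_eventually_append :
    B ∈ treeFilter 𝒰 e s ↔ ∀ᶠ a in 𝒰 s, B ∈ treeFilter 𝒰 e (s ++ [a]) := by
  constructor
  · rintro ⟨g, hg, hB⟩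
    filter_upwards [hg s] with a ha
    exact ⟨g, hg, (branchesThrough_append_subset ha).trans hB⟩
  · intro h_succ
    have h_tree (u : List α) : ∃ g : List α → Set α, (∀ t, g t ∈ 𝒰 t) ∧
        (B ∈ treeFilter 𝒰 e u → branchesThrough e g u ⊆ B) := by
      by_cases hu : B ∈ treeFilter 𝒰 e u
      · exact (mem_treeFilter.1 hu).imp fun g hg => ⟨hg.1, fun _ => hg.2⟩
      · exact ⟨fun _ => univ, fun _ => univ_mem, fun h => absurd h hu⟩
    choose G hG hGB using h_tree
    -- Above `s ++ [a]`, the glued tree is the one chosen for `s ++ [a]`.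
    refine ⟨fun t => {a | t = s → B ∈ treeFilter 𝒰 e (s ++ [a])} ∩ G (t.take (s.length + 1)) t,
      fun t => inter_mem ?_ (hG _ t), fun P hP => ?_⟩
    · by_cases ht : t = s
      · subst ht
        exact mem_of_superset h_succ fun a ha _ => ha
      · exact mem_of_superset univ_mem fun a _ h => absurd h ht
    · have h_stem : initialSegment (e P) (s.length + 1) = s ++ [e P s.length] := by
        rw [initialSegment_succ, hP.1]
      refine hGB _ ((mem_branchesThrough_iff_append.1 hP).1.1 rfl) (h_stem ▸ ?_)
      refine mem_branchesThrough_initialSegment.2 fun n hn => ?_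
      have := (hP.2 n (Nat.le_of_succ_le hn)).2
      rwa [take_initialSegment _ hn] at this

theorem eventually_forall_initialSegment {p : List α → Prop}
    (h_succ : ∀ t, p t → ∀ᶠ a in 𝒰 t, p (t ++ [a])) (hs : p s) :
    ∀ᶠ P in treeFilter 𝒰 e s, ∀ n ≥ s.length, p (initialSegment (e P) n) := by
  refine ⟨fun t => {a | p t → p (t ++ [a])}, fun t => ?_, fun P hP n hn => ?_⟩
  · by_cases ht : p t
    · exact mem_of_superset (h_succ t ht) fun a ha _ => ha
    · exact mem_of_superset univ_mem fun a _ h => absurd h ht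
  · induction n, hn using Nat.le_induction with
    | base => exact hP.1.symm ▸ hs
    | succ n hn ih => exact initialSegment_succ (e P) n ▸ hP.2 n hn ih

theorem eventually_forall_mem_treeFilter (hB : B ∈ treeFilter 𝒰 e s) :
    ∀ᶠ P in treeFilter 𝒰 e s, ∀ n ≥ s.length, B ∈ treeFilter 𝒰 e (initialSegment (e P) n) :=
  eventually_forall_initialSegment (fun _ => mem_treeFilter_iff_eventually_append.1) hB

theorem eventually_forall_notMem_treeFilter (hB : B ∉ treeFilter 𝒰 e s) :
    ∀ᶠ P in treeFilter 𝒰 e s, ∀ n ≥ s.length, B ∉ treeFilter 𝒰 e (initialSegment (e P) n) :=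
  eventually_forall_initialSegment (p := fun t => B ∉ treeFilter 𝒰 e t)
    (fun _ ht => Ultrafilter.eventually_not.2 (mt mem_treeFilter_iff_eventually_append.2 ht)) hB

variable (𝒰 e) in
/-- The filter of sets containing, for every stem `s`, all branches of a tree with stem `s` as in
`treeFilter`. Its dual ideal consists of the Ramsey null sets. -/
def ramseyFilter : Filter X := ⨆ s, treeFilter 𝒰 e s

theorem mem_ramseyFilter : B ∈ ramseyFilter 𝒰 e ↔ ∀ s, B ∈ treeFilter 𝒰 e s :=
  mem_iSup

theorem treeFilter_le_ramseyFilter (s : List α) : treeFilter 𝒰 e s ≤ ramseyFilter 𝒰 e :=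
  le_iSup _ s

/-- A node has only finitely many initial segments, so the trees belonging to the various stems can
be intersected into one. -/
theorem exists_forall_branchesThrough_subset (hB : B ∈ ramseyFilter 𝒰 e) :
    ∃ g : List α → Set α, (∀ t, g t ∈ 𝒰 t) ∧ ∀ s, branchesThrough e g s ⊆ B := by
  choose G hG hGB using mem_ramseyFilter.1 hB
  refine ⟨fun t => ⋂ m ∈ Iic t.length, G (t.take m) t,
    fun t => (biInter_mem (finite_Iic _)).2 fun m _ => hG _ t, fun s P hP => hGB s ?_⟩
  refine ⟨hP.1, fun n hn => ?_⟩
  have := mem_iInter₂.1 (hP.2 n hn) s.length (by simpa using hn)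
  rwa [take_initialSegment _ hn, hP.1] at this

theorem iInter_mem_ramseyFilter {B : ℕ → Set X} (hB : ∀ n, B n ∈ ramseyFilter 𝒰 e) :
    ⋂ n, B n ∈ ramseyFilter 𝒰 e := by
  choose G hG hGB using fun n => exists_forall_branchesThrough_subset (hB n)
  -- A branch need only satisfy the `n`-th requirement from level `n` on.
  refine mem_ramseyFilter.2 fun s => ⟨fun t => ⋂ n ∈ Iic t.length, G n t,
    fun t => (biInter_mem (finite_Iic _)).2 fun n _ => hG n t, fun P hP => mem_iInter.2 fun n => ?_⟩
  refine hGB n (initialSegment (e P) (max s.length n)) ?_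
  refine mem_branchesThrough_initialSegment.2 fun m hm => ?_
  exact mem_iInter₂.1 (hP.2 m (le_of_max_le_left hm)) n (by simpa using le_of_max_le_right hm)

instance : CountableInterFilter (ramseyFilter 𝒰 e) where
  countable_sInter_mem S hS hB := by
    rcases S.eq_empty_or_nonempty with rfl | hS_ne
    · simp
    · obtain ⟨B, rfl⟩ := hS.exists_eq_range hS_ne
      rw [sInter_range]
      exact iInter_mem_ramseyFilter fun n => hB _ (mem_range_self n)

variable (𝒰 e) in
/-- The points of whose coded sequence almost every initial segment is the stem of a tree all of
whose branches lie in `B`. -/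
def ramseyKernel (B : Set X) : Set X :=
  {P | ∀ᶠ n in atTop, B ∈ treeFilter 𝒰 e (initialSegment (e P) n)}

theorem ramseyKernel_mem_treeFilter (hB : B ∈ treeFilter 𝒰 e s) :
    ramseyKernel 𝒰 e B ∈ treeFilter 𝒰 e s := by
  filter_upwards [eventually_forall_mem_treeFilter hB] with P hP
  exact eventually_atTop.2 ⟨s.length, hP⟩

theorem compl_ramseyKernel_mem_treeFilter (hB : B ∉ treeFilter 𝒰 e s) :
    (ramseyKernel 𝒰 e B)ᶜ ∈ treeFilter 𝒰 e s := by
  filter_upwards [eventually_forall_notMem_treeFilter hB] with P hP h_kernel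
  obtain ⟨n, hn, h_mem⟩ := (h_kernel.and (eventually_ge_atTop s.length)).exists
  exact hP n h_mem hn

theorem ramseyKernel_eventuallyLE (B : Set X) : ramseyKernel 𝒰 e B ≤ᶠ[ramseyFilter 𝒰 e] B := by
  refine mem_ramseyFilter.2 fun s => ?_
  by_cases hB : B ∈ treeFilter 𝒰 e s
  · exact mem_of_superset hB fun P hP _ => hP
  · exact mem_of_superset (compl_ramseyKernel_mem_treeFilter hB) fun P hP h => absurd h hP

variable (𝒰 e) in
/-- `B` is Ramsey with respect to `𝒰` if every `s` is the stem of a tree whose branches all lie in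
`B` or all lie in its complement. -/
def IsRamsey (B : Set X) : Prop := ∀ s, B ∈ treeFilter 𝒰 e s ∨ Bᶜ ∈ treeFilter 𝒰 e s

theorem isRamsey_ramseyKernel (B : Set X) : IsRamsey 𝒰 e (ramseyKernel 𝒰 e B) := fun s => by
  by_cases hB : B ∈ treeFilter 𝒰 e s
  · exact .inl (ramseyKernel_mem_treeFilter hB)
  · exact .inr (compl_ramseyKernel_mem_treeFilter hB)

theorem IsRamsey.eventuallyLE_ramseyKernel {Z : Set X} (hZ : IsRamsey 𝒰 e Z)
    (hZB : Z ≤ᶠ[ramseyFilter 𝒰 e] B) : Z ≤ᶠ[ramseyFilter 𝒰 e] ramseyKernel 𝒰 e B := by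
  refine mem_ramseyFilter.2 fun s => ?_
  rcases hZ s with hs | hs
  · have hB : B ∈ treeFilter 𝒰 e s := by
      filter_upwards [hs, treeFilter_le_ramseyFilter s hZB] with P hP h using h hP
    exact mem_of_superset (ramseyKernel_mem_treeFilter hB) fun P hP _ => hP
  · exact mem_of_superset hs fun P hP h => absurd h hP

theorem IsRamsey.congr {C : Set X} (hB : IsRamsey 𝒰 e B) (hBC : B =ᶠ[ramseyFilter 𝒰 e] C) :
    IsRamsey 𝒰 e C := fun s => by
  have hBC_s : B =ᶠ[treeFilter 𝒰 e s] C := hBC.filter_mono (treeFilter_le_ramseyFilter s)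
  exact (hB s).imp (congr_sets hBC_s.mem_iff).1 (congr_sets hBC_s.compl.mem_iff).1

theorem IsRamsey.compl (hB : IsRamsey 𝒰 e B) : IsRamsey 𝒰 e Bᶜ := fun s => by
  rw [compl_compl]
  exact (hB s).symm

theorem IsRamsey.iUnion {B : ℕ → Set X} (hB : ∀ n, IsRamsey 𝒰 e (B n)) :
    IsRamsey 𝒰 e (⋃ n, B n) := by
  have h_le : ⋃ n, B n ≤ᶠ[ramseyFilter 𝒰 e] ⋃ _ : ℕ, ramseyKernel 𝒰 e (⋃ n, B n) :=
    .countable_iUnion fun n =>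
      (hB n).eventuallyLE_ramseyKernel (subset_iUnion B n).eventuallyLE
  rw [iUnion_const] at h_le
  exact (isRamsey_ramseyKernel _).congr ((ramseyKernel_eventuallyLE _).antisymm h_le)

variable (𝒰 e) in
/-- The σ-algebra of the sets that are Ramsey with respect to `𝒰`. -/
abbrev ramseyMeasurableSpace : MeasurableSpace X where
  MeasurableSet' := IsRamsey 𝒰 e
  measurableSet_empty _ := .inr (compl_empty ▸ univ_mem)
  measurableSet_compl _ := IsRamsey.compl
  measurableSet_iUnion _ := IsRamsey.iUnion

theorem isMeasurableEnvelope_compl_ramseyKernel_compl (A : Set X) :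
    letI := ramseyMeasurableSpace 𝒰 e
    IsMeasurableEnvelope (ramseyFilter 𝒰 e) A (ramseyKernel 𝒰 e Aᶜ)ᶜ :=
  letI := ramseyMeasurableSpace 𝒰 e
  { measurableSet := (isRamsey_ramseyKernel Aᶜ).compl
    le := by simpa only [compl_compl] using (ramseyKernel_eventuallyLE Aᶜ).compl
    le_of_le := fun Z hZ hAZ => by
      simpa only [compl_compl] using
        (IsRamsey.eventuallyLE_ramseyKernel (IsRamsey.compl hZ) hAZ.compl).compl }

theorem IsRamsey.souslinOp {F : List ℕ → Set X} (hF : ∀ σ, IsRamsey 𝒰 e (F σ)) :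
    IsRamsey 𝒰 e (SouslinOp F) := by
  let := ramseyMeasurableSpace 𝒰 e
  obtain ⟨E, hE, hFE⟩ := eventuallyMeasurableSet_souslinOp
    (fun A => ⟨_, isMeasurableEnvelope_compl_ramseyKernel_compl A⟩) hF
  exact IsRamsey.congr hE hFE.symm

theorem isRamsey_of_forall_exists_initialSegment
    (hB : ∀ P ∈ B, ∃ n, ∀ Q, initialSegment (e Q) n = initialSegment (e P) n → Q ∈ B) :
    IsRamsey 𝒰 e B := by
  have h_subset : B ⊆ ramseyKernel 𝒰 e B := fun P hP => by
    obtain ⟨n, hn⟩ := hB P hP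
    refine eventually_atTop.2
      ⟨n, fun m hm => ⟨fun _ => univ, fun _ => univ_mem, fun Q hQ => hn Q ?_⟩⟩
    have hQP := hQ.1
    rw [length_initialSegment] at hQP
    rw [← take_initialSegment _ hm, hQP, take_initialSegment _ hm]
  exact (isRamsey_ramseyKernel B).congr
    ((ramseyKernel_eventuallyLE B).antisymm h_subset.eventuallyLE)

theorem IsRamsey.of_souslinMeasurable [TopologicalSpace X]
    (h_open : ∀ O : Set X, IsOpen O → IsRamsey 𝒰 e O) (hB : SouslinMeasurable B) :
    IsRamsey 𝒰 e B :=
  hB {C | IsRamsey 𝒰 e C} h_open (fun _ hC => hC.compl)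
    (fun _ hC _ hD => @MeasurableSet.union _ (ramseyMeasurableSpace 𝒰 e) _ _ hC hD)
    (fun _ hF => IsRamsey.souslinOp hF)

theorem exists_fiber_mem_treeFilter {ι : Type*} [Finite ι] [Nonempty ι] {c : X → ι}
    (hc : ∀ i, IsRamsey 𝒰 e (c ⁻¹' {i})) (s : List α) :
    ∃ i, c ⁻¹' {i} ∈ treeFilter 𝒰 e s := by
  by_contra! h_none
  have h_avoid : ∀ᶠ P in treeFilter 𝒰 e s, ∀ i, P ∈ (c ⁻¹' {i})ᶜ :=
    eventually_all.2 fun i => (hc i s).resolve_left (h_none i)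
  obtain ⟨i⟩ := ‹Nonempty ι›
  exact h_none i (h_avoid.mono fun P hP => absurd rfl (hP (c P)))

end TreeFilter

section BlockSequences

open Filter

variable {k : ℕ} {𝒰 : Ultrafilter (ℕ → ℤ)}

theorem isRamsey_of_isOpen_blockSeq {𝒱 : List (ℕ → ℤ) → Ultrafilter (ℕ → ℤ)} {O : Set (BlockSeq k)}
    (hO : IsOpen O) : IsRamsey (X := BlockSeq k) 𝒱 Subtype.val O :=
  isRamsey_of_forall_exists_initialSegment fun _ hP =>
    exists_initialSegment_mem_of_generateOpen hO hP

theorem exists_forall_lt_of_finite_support {M : Type*} [Zero M] {t : List (ℕ → M)}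
    (ht : ∀ p ∈ t, (support p).Finite) : ∃ N, ∀ p ∈ t, ∀ m, p m ≠ 0 → m < N := by
  have h_fin : (⋃ p ∈ {p | p ∈ t}, support p).Finite :=
    t.finite_toSet.biUnion ht
  obtain ⟨N, hN⟩ := h_fin.bddAbove
  exact ⟨N + 1, fun p hp m hm => Nat.lt_succ_of_le (hN (mem_biUnion (x := p) hp hm))⟩

theorem IsFinBlockSeq.eventually_append (h𝒰 : IsCofiniteUF k 𝒰) {t : List (ℕ → ℤ)}
    (ht : IsFinBlockSeq k t) : ∀ᶠ p in 𝒰, IsFinBlockSeq k (t ++ [p]) := by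
  obtain ⟨N, hN⟩ := exists_forall_lt_of_finite_support fun p hp => (ht.1 p hp).1
  filter_upwards [h𝒰.1, h𝒰.2 N] with p hp hpN
  refine ⟨List.forall_mem_append.2 ⟨ht.1, by simpa using hp⟩, List.pairwise_append.2
    ⟨ht.2, List.pairwise_singleton _ _, fun q hq p' hp' m n hm hn => ?_⟩⟩
  rw [List.mem_singleton.1 hp'] at hn
  exact (hN q hq m hm).trans_le (not_lt.1 fun hlt => hn (hpN n hlt))

theorem IsFinBlockSeq.of_prefix {t t' : List (ℕ → ℤ)} (ht : IsFinBlockSeq k t) (h : t' <+: t) :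
    IsFinBlockSeq k t' :=
  ⟨fun p hp => ht.1 p (h.subset hp), ht.2.sublist h.sublist⟩

/-- The tree of finite block sequences in which the successors of a node `t` are taken
from `g t`. -/
def blockTree (k : ℕ) (g : List (ℕ → ℤ) → Set (ℕ → ℤ)) : Set (List (ℕ → ℤ)) :=
  {t | IsFinBlockSeq k t ∧ ∀ u p, u ++ [p] <+: t → p ∈ g u}

theorem isUTree_blockTree (h𝒰 : IsCofiniteUF k 𝒰) {g : List (ℕ → ℤ) → Set (ℕ → ℤ)}
    (hg : ∀ t, g t ∈ 𝒰) : IsUTree k 𝒰 (blockTree k g) [] where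
  blocks _ ht := ht.1
  prefixClosed _ ht _ h := ⟨ht.1.of_prefix h, fun u p hu => ht.2 u p (hu.trans h)⟩
  stemMem := ⟨⟨by simp, List.Pairwise.nil⟩, by simp⟩
  stemComparable _ _ := .inl List.nil_prefix
  branch t ht _ := by
    filter_upwards [ht.1.eventually_append h𝒰, hg t] with p h_block hp
    refine ⟨h_block, fun u q hu => ?_⟩
    rcases List.prefix_concat_iff.1 hu with hu | hu
    · obtain ⟨rfl, rfl⟩ := List.append_singleton_inj.1 hu
      exact hp
    · exact ht.2 u q hu

theorem mem_branchesThrough_of_mem_branches_blockTree {g : List (ℕ → ℤ) → Set (ℕ → ℤ)}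
    {P : BlockSeq k} (hP : P.1 ∈ Branches (blockTree k g)) :
    P ∈ branchesThrough (X := BlockSeq k) Subtype.val g [] :=
  ⟨initialSegment_zero _, fun n _ =>
    (hP (n + 1)).2 _ _ (initialSegment_succ P.1 n ▸ List.prefix_rfl)⟩

theorem exists_isUTree_of_mem_treeFilter (h𝒰 : IsCofiniteUF k 𝒰) {B : Set (BlockSeq k)}
    (hB : B ∈ treeFilter (X := BlockSeq k) (fun _ => 𝒰) Subtype.val []) :
    ∃ U, IsUTree k 𝒰 U [] ∧ ∀ P : BlockSeq k, P.1 ∈ Branches U → P ∈ B := by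
  obtain ⟨g, hg, hgB⟩ := mem_treeFilter.1 hB
  exact ⟨blockTree k g, isUTree_blockTree h𝒰 hg,
    fun _ hP => hgB (mem_branchesThrough_of_mem_branches_blockTree hP)⟩

theorem souslin_measurable_UTree_general (h𝒰 : IsCofiniteUF k 𝒰) {ι : Type*} [Finite ι]
    [Nonempty ι] {c : BlockSeq k → ι} (hc : ∀ i, SouslinMeasurable (c ⁻¹' {i})) :
    ∃ i U, IsUTree k 𝒰 U [] ∧ ∀ P : BlockSeq k, P.1 ∈ Branches U → c P = i := by
  have h_ramsey (i : ι) : IsRamsey (X := BlockSeq k) (fun _ => 𝒰) Subtype.val (c ⁻¹' {i}) :=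
    .of_souslinMeasurable (fun _ => isRamsey_of_isOpen_blockSeq) (hc i)
  obtain ⟨i, hi⟩ := exists_fiber_mem_treeFilter h_ramsey []
  exact ⟨i, exists_isUTree_of_mem_treeFilter h𝒰 hi⟩

end BlockSequences

/-- for every Souslin measurable colouring `c : FIN_{±k}^[∞] → r`
(metrizable topology) there are `i < r` and a `𝒰`-tree `U` with stem `∅` such that
`[U] ⊆ c⁻¹{i}`. -/
theorem souslin_measurable_UTree (k : ℕ) (hk : 1 ≤ k) (𝒰 : Ultrafilter (ℕ → ℤ))
    (h𝒰 : IsGowersUF k 𝒰) (r : ℕ) (hr : 1 ≤ r) (c : BlockSeq k → Fin r)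
    (hc : ∀ i : Fin r, SouslinMeasurable (c ⁻¹' {i})) :
    ∃ (i : Fin r) (U : Set (List (ℕ → ℤ))), IsUTree k 𝒰 U [] ∧
      ∀ P : BlockSeq k, P.1 ∈ Branches U → c P = i := by
  have : Nonempty (Fin r) := ⟨⟨0, hr⟩⟩
  exact souslin_measurable_UTree_general h𝒰.1 hc
end

section
/- Let 𝒰 be a cofinite subsymmetric ultrafilter on FIN_{±k} with 𝒰 + (−T)^j 𝒰 = (−T)^j 𝒰 + 𝒰 = 𝒰 for all j ≤ k, and let U be a 𝒰-tree with stem ∅. Then there is an infinite block sequence P = (p_n)_{n<ω} in FIN_{±k} such that every infinite block sequence Q with Q ≤_{(−T)} P belongs to [U]. -/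
open Function Set

/-!
Idempotence gives `(−T)^i 𝒰 + (−T)^j 𝒰 = (−T)^{min i j} 𝒰`, so if `t ∈ U` and the exponents have
minimum `0`, then `t⌢((−T)^{j₀} p₀ + ⋯ + (−T)^{j_m} p_m) ∈ U` for `𝒰`-most `p₀`, …, for `𝒰`-most
`p_m`. Remembering only whether the exponent `0` has already been used, one obtains a `𝒰`-branching
tree of finite sequences `l` such that every way of cutting `l` into blocks and choosing exponents
produces a node of `U`. A diagonalization yields a sequence `P` all of whose finite subsequences lie
in this tree. Finally, if `Q ≤_{(−T)} P` is a block sequence, then the indices used by each term of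
`Q` precede those used by the next one, so each initial segment of `Q` comes from one finite
subsequence of `P`.
-/

section Diagonalization

open scoped List

variable {α : Type*}

theorem exists_seq_forall_map_range_mem {V : Set (List α)} (hnil : [] ∈ V)
    (hV : ∀ l ∈ V, ∃ a, l ++ [a] ∈ V) : ∃ P : ℕ → α, ∀ n, (List.range n).map P ∈ V := by
  choose next hnext using hV
  let L : ℕ → {l // l ∈ V} := Nat.rec ⟨[], hnil⟩ fun _ l => ⟨_, hnext l.1 l.2⟩
  let P : ℕ → α := fun n => next (L n).1 (L n).2
  have hL : ∀ n, (L n).1 = (List.range n).map P := by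
    intro n
    induction n with
    | zero => rfl
    | succ n ih => rw [List.range_succ, List.map_append, ← ih]; rfl
  exact ⟨P, fun n => hL n ▸ (L n).2⟩

theorem eventually_forall_sublist_append_singleton_mem {F : Filter α} {V : Set (List α)}
    (hV : ∀ l ∈ V, ∀ᶠ a in F, l ++ [a] ∈ V) {L : List α} (hL : ∀ l, l <+ L → l ∈ V) :
    ∀ᶠ a in F, ∀ l, l <+ L ++ [a] → l ∈ V := by
  have hext : ∀ᶠ a in F, ∀ l ∈ L.sublists, l ++ [a] ∈ V :=
    (Filter.eventually_all_finite L.sublists.finite_toSet).2 fun l hl =>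
      hV l (hL l (List.mem_sublists.1 hl))
  filter_upwards [hext] with a ha l hl
  obtain ⟨l₁, l₂, rfl, h₁, h₂⟩ := List.sublist_append_iff.1 hl
  rcases List.sublist_singleton.1 h₂ with rfl | rfl
  · simpa using hL l₁ h₁
  · exact ha l₁ (List.mem_sublists.2 h₁)

theorem exists_seq_forall_pairwise_lt_map_mem {F : Filter α} [F.NeBot] {V : Set (List α)}
    (hnil : [] ∈ V) (hV : ∀ l ∈ V, ∀ᶠ a in F, l ++ [a] ∈ V) :
    ∃ P : ℕ → α, ∀ l : List ℕ, l.Pairwise (· < ·) → l.map P ∈ V := by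
  obtain ⟨P, hP⟩ := exists_seq_forall_map_range_mem (V := {L | ∀ l, l <+ L → l ∈ V})
    (fun l hl => List.sublist_nil.1 hl ▸ hnil)
    fun L hL => (eventually_forall_sublist_append_singleton_mem hV hL).exists
  refine ⟨P, fun l hl => ?_⟩
  obtain ⟨b, hb⟩ := l.finite_toSet.bddAbove
  have hsub : l ⊆ List.range (b + 1) := fun n hn => List.mem_range.2 (Nat.lt_succ_of_le (hb hn))
  have hlb : l <+ List.range (b + 1) :=
    List.sublist_of_subperm_of_pairwise (List.subperm_of_subset hl.nodup hsub) hl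
      List.pairwise_lt_range
  exact hP (b + 1) _ (hlb.map P)

end Diagonalization

section Tetris

variable {p q : ℕ → ℤ}

theorem abs_negT_apply (p : ℕ → ℤ) (n : ℕ) : |negT p n| = max (|p n| - 1) 0 := by
  simp only [negT, tetris, Pi.neg_apply]
  grind

theorem abs_negT_iterate_apply (j : ℕ) (p : ℕ → ℤ) (n : ℕ) :
    |negT^[j] p n| = max (|p n| - j) 0 := by
  induction j generalizing p with
  | zero => simp
  | succ j ih =>
    rw [iterate_succ_apply, ih, abs_negT_apply]
    grind

theorem negT_iterate_apply_eq_zero (j : ℕ) {n : ℕ} (hn : p n = 0) : negT^[j] p n = 0 := by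
  simpa [hn] using abs_negT_iterate_apply j p n

theorem negT_iterate_apply_ne_zero {j n : ℕ} (hn : (j : ℤ) < |p n|) : negT^[j] p n ≠ 0 := by
  rw [← abs_pos, abs_negT_iterate_apply]
  exact lt_max_of_lt_left (sub_pos.2 hn)

theorem negT_add (h : Disjoint (support p) (support q)) : negT (p + q) = negT p + negT q := by
  funext n
  have hn : p n = 0 ∨ q n = 0 := by
    by_contra! hn
    exact Set.disjoint_left.1 h hn.1 hn.2
  rcases hn with hn | hn <;> simp [negT, tetris, hn]

theorem support_negT_subset (p : ℕ → ℤ) : support (negT p) ⊆ support p :=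
  fun _ hn h => hn (negT_iterate_apply_eq_zero 1 h)

theorem negT_iterate_add (j : ℕ) (h : Disjoint (support p) (support q)) :
    negT^[j] (p + q) = negT^[j] p + negT^[j] q := by
  induction j generalizing p q with
  | zero => rfl
  | succ j ih =>
    simp only [iterate_succ_apply]
    rw [negT_add h, ih (h.mono (support_negT_subset p) (support_negT_subset q))]

theorem BlockLt.disjoint_support (h : BlockLt p q) : Disjoint (support p) (support q) :=
  Set.disjoint_left.2 fun n hp hq => lt_irrefl n (h n n hp hq)

end Tetris

section Ultrafilter

variable {k : ℕ} {𝒰 : Ultrafilter (ℕ → ℤ)}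

theorem IsCofiniteUF.eventually_blockLt (h : IsCofiniteUF k 𝒰) {p : ℕ → ℤ}
    (hp : (support p).Finite) : ∀ᶠ q in 𝒰, BlockLt p q := by
  obtain ⟨b, hb⟩ := hp.bddAbove
  filter_upwards [h.2 (b + 1)] with q hq m n hm hn
  by_contra! hnm
  exact hn (hq n (Nat.lt_succ_of_le (hnm.trans (hb hm))))

theorem IsCofiniteUF.eventually_isFinBlockSeq_append (h : IsCofiniteUF k 𝒰)
    {l : List (ℕ → ℤ)} (hl : IsFinBlockSeq k l) : ∀ᶠ q in 𝒰, IsFinBlockSeq k (l ++ [q]) := by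
  have hlt : ∀ᶠ q in 𝒰, ∀ p ∈ l, BlockLt p q :=
    (Filter.eventually_all_finite l.finite_toSet).2 fun p hp => h.eventually_blockLt (hl.1 p hp).1
  filter_upwards [h.1, hlt] with q hq hlq
  refine ⟨?_, List.pairwise_append.2 ⟨hl.2, List.pairwise_singleton _ _, by simpa using hlq⟩⟩
  simpa [or_imp, forall_and] using ⟨hl.1, hq⟩

theorem IsIdempotentUF.eventually_negT_add_negT_mem (h : IsIdempotentUF k 𝒰)
    {A : Set (ℕ → ℤ)} {i j : ℕ} (hi : i ≤ k) (hj : j ≤ k)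
    (hA : ∀ᶠ q in 𝒰, negT^[min i j] q ∈ A) :
    ∀ᶠ p in 𝒰, ∀ᶠ q in 𝒰, negT^[i] p + negT^[j] q ∈ A := by
  rcases le_total i j with hij | hji
  · obtain ⟨d, rfl⟩ := Nat.exists_eq_add_of_le hij
    rw [min_eq_left hij] at hA
    have hsum : ∀ᶠ p in 𝒰, ∀ᶠ q in 𝒰, BlockLt p (negT^[d] q) ∧ negT^[i] (p + negT^[d] q) ∈ A :=
      (h d (le_trans (Nat.le_add_left d i) hj) {p | negT^[i] p ∈ A}).1.2 hA
    filter_upwards [hsum] with p hp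
    filter_upwards [hp] with q ⟨hlt, hmem⟩
    rwa [negT_iterate_add _ hlt.disjoint_support, ← iterate_add_apply] at hmem
  · obtain ⟨d, rfl⟩ := Nat.exists_eq_add_of_le hji
    rw [min_eq_right hji] at hA
    have hsum : ∀ᶠ p in 𝒰, ∀ᶠ q in 𝒰, BlockLt (negT^[d] p) q ∧ negT^[j] (negT^[d] p + q) ∈ A :=
      (h d (le_trans (Nat.le_add_left d j) hi) {p | negT^[j] p ∈ A}).2.2 hA
    filter_upwards [hsum] with p hp
    filter_upwards [hp] with q ⟨hlt, hmem⟩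
    rwa [negT_iterate_add _ hlt.disjoint_support, ← iterate_add_apply] at hmem

end Ultrafilter

section Combinations

variable {ι : Type*} {k : ℕ}

/-- The combination `(−T)^{j₀}(p_{n₀}) + ⋯ + (−T)^{j_m}(p_{n_m})` coded by the list of its pairs
`(nᵢ, jᵢ)`. -/
def negTSum (P : ι → ℕ → ℤ) (w : List (ι × ℕ)) : ℕ → ℤ :=
  (w.map fun x => negT^[x.2] (P x.1)).sum

/-- The conditions `jᵢ < k` and `min jᵢ = 0` on the exponents of a coded combination. -/
def HasFullExponents (k : ℕ) (w : List (ι × ℕ)) : Prop :=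
  (∀ x ∈ w, x.2 < k) ∧ ∃ x ∈ w, x.2 = 0

theorem InSpanNegT.exists_list {P : ℕ → ℕ → ℤ} {q : ℕ → ℤ} (h : InSpanNegT k P q) :
    ∃ w : List (ℕ × ℕ),
      (w.map Prod.fst).Pairwise (· < ·) ∧ HasFullExponents k w ∧ q = negTSum P w := by
  obtain ⟨m, n, j, hn, hj, hj₀, rfl⟩ := h
  refine ⟨List.ofFn fun i => (n i, j i), ?_, ⟨?_, ?_⟩, ?_⟩
  · rw [List.map_ofFn, List.pairwise_ofFn]
    exact fun _ _ hab => hn hab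
  · exact List.forall_mem_ofFn_iff.2 hj
  · obtain ⟨i, hi⟩ := hj₀
    exact ⟨_, List.mem_ofFn.2 ⟨i, rfl⟩, hi⟩
  · rw [negTSum, List.map_ofFn, List.sum_ofFn]
    rfl

theorem negTSum_apply_eq_zero {P : ι → ℕ → ℤ} {w : List (ι × ℕ)} {a : ℕ}
    (h : ∀ x ∈ w, P x.1 a = 0) : negTSum P w a = 0 := by
  induction w with
  | nil => rfl
  | cons x w ih =>
    obtain ⟨hx, hw⟩ := List.forall_mem_cons.1 h
    simpa [negTSum, negT_iterate_apply_eq_zero _ hx] using ih hw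

theorem IsBlockSeq.apply_eq_zero_of_ne {P : ℕ → ℕ → ℤ} (hP : IsBlockSeq k P) {m n a : ℕ}
    (hmn : m ≠ n) (hm : P m a ≠ 0) : P n a = 0 := by
  by_contra hn
  rcases hmn.lt_or_gt with hlt | hlt
  · exact lt_irrefl a (hP.2 m n hlt a a hm hn)
  · exact lt_irrefl a (hP.2 n m hlt a a hn hm)

theorem IsBlockSeq.negTSum_apply_ne_zero {P : ℕ → ℕ → ℤ} (hP : IsBlockSeq k P)
    {w : List (ℕ × ℕ)} (hw : (w.map Prod.fst).Nodup) {x : ℕ × ℕ} (hx : x ∈ w) {a : ℕ}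
    (ha : (x.2 : ℤ) < |P x.1 a|) : negTSum P w a ≠ 0 := by
  obtain ⟨u, v, rfl⟩ := List.append_of_mem hx
  have hPa : P x.1 a ≠ 0 := abs_pos.1 ((Int.natCast_nonneg _).trans_lt ha)
  have hne : ∀ y ∈ u ++ v, x.1 ≠ y.1 := by
    rw [List.map_append, List.map_cons, List.nodup_middle, List.nodup_cons] at hw
    intro y hy hxy
    exact hw.1 (by rw [hxy, ← List.map_append]; exact List.mem_map_of_mem hy)
  have hrest : negTSum P (u ++ v) a = 0 :=
    negTSum_apply_eq_zero fun y hy => hP.apply_eq_zero_of_ne (hne y hy) hPa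
  have hsplit : negTSum P (u ++ x :: v) a = negT^[x.2] (P x.1) a + negTSum P (u ++ v) a := by
    simp only [negTSum, List.map_append, List.map_cons, List.sum_append, List.sum_cons,
      Pi.add_apply]
    ring
  rw [hsplit, hrest, add_zero]
  exact negT_iterate_apply_ne_zero ha

theorem IsBlockSeq.lt_of_blockLt_negTSum {P : ℕ → ℕ → ℤ} (hP : IsBlockSeq k P)
    {v w : List (ℕ × ℕ)} (hv : (v.map Prod.fst).Nodup) (hw : (w.map Prod.fst).Nodup)
    (hvw : BlockLt (negTSum P v) (negTSum P w)) {x y : ℕ × ℕ} (hx : x ∈ v) (hy : y ∈ w)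
    (hxk : x.2 < k) (hyk : y.2 < k) : x.1 < y.1 := by
  obtain ⟨a, ha⟩ := (hP.1 x.1).2.2
  obtain ⟨b, hb⟩ := (hP.1 y.1).2.2
  have hxa : (x.2 : ℤ) < |P x.1 a| := ha ▸ Nat.cast_lt.2 hxk
  have hyb : (y.2 : ℤ) < |P y.1 b| := hb ▸ Nat.cast_lt.2 hyk
  have hva : negTSum P v a ≠ 0 := hP.negTSum_apply_ne_zero hv hx hxa
  by_contra! hyx
  rcases hyx.lt_or_eq with hlt | heq
  · have hab : a < b := hvw a b hva (hP.negTSum_apply_ne_zero hw hy hyb)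
    have hba : b < a := hP.2 y.1 x.1 hlt b a (abs_pos.1 ((Int.natCast_nonneg _).trans_lt hyb))
      (abs_pos.1 ((Int.natCast_nonneg _).trans_lt hxa))
    exact lt_asymm hab hba
  · have hya : (y.2 : ℤ) < |P y.1 a| := by rw [heq, ha]; exact Nat.cast_lt.2 hyk
    exact lt_irrefl a (hvw a a hva (hP.negTSum_apply_ne_zero hw hy hya))

end Combinations

section Extendible

variable {k : ℕ} {𝒰 : Ultrafilter (ℕ → ℤ)} {U : Set (List (ℕ → ℤ))} {t : List (ℕ → ℤ)}
  {r : ℕ → ℤ} {full : Prop}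

/-- The node `t`, followed by an unfinished combination with partial sum `r`, can be continued
inside `U` by one more summand `(−T)^j q`, for `𝒰`-many `q`. The proposition `full` records whether
the exponent `0` has occurred in `r`; otherwise it has to be the exponent of the new summand. -/
def Extendible (k : ℕ) (𝒰 : Ultrafilter (ℕ → ℤ)) (U : Set (List (ℕ → ℤ)))
    (t : List (ℕ → ℤ)) (r : ℕ → ℤ) (full : Prop) : Prop :=
  t ∈ U ∧ ∀ j < k, full ∨ j = 0 → ∀ᶠ q in 𝒰, t ++ [r + negT^[j] q] ∈ U

/-- However the elements of a list are added to the unfinished combination `r` after `t`, with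
exponents below `k` and finishing the combination at any moments at which this is allowed, the
result is `Extendible`. -/
def ExtendibleAlong (k : ℕ) (𝒰 : Ultrafilter (ℕ → ℤ)) (U : Set (List (ℕ → ℤ))) :
    List (ℕ → ℤ) → (ℕ → ℤ) → Prop → List (ℕ → ℤ) → Prop
  | t, r, full, [] => Extendible k 𝒰 U t r full
  | t, r, full, p :: l => ∀ j < k,
      ExtendibleAlong k 𝒰 U t (r + negT^[j] p) (full ∨ j = 0) l ∧
        (full ∨ j = 0 → ExtendibleAlong k 𝒰 U (t ++ [r + negT^[j] p]) 0 False l)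

theorem extendible_zero_of_mem (hU : ∀ t ∈ U, ∀ᶠ p in 𝒰, t ++ [p] ∈ U) (ht : t ∈ U) :
    Extendible k 𝒰 U t 0 False := by
  refine ⟨ht, fun j _ hj => ?_⟩
  obtain rfl : j = 0 := hj.resolve_left id
  simpa using hU t ht

theorem Extendible.eventually_add (h𝒰 : IsIdempotentUF k 𝒰) (h : Extendible k 𝒰 U t r full)
    {i : ℕ} (hi : i < k) : ∀ᶠ p in 𝒰, Extendible k 𝒰 U t (r + negT^[i] p) (full ∨ i = 0) := by
  have hext : ∀ᶠ p in 𝒰, ∀ j ∈ Set.Iio k, (full ∨ i = 0) ∨ j = 0 →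
      ∀ᶠ q in 𝒰, t ++ [r + negT^[i] p + negT^[j] q] ∈ U := by
    refine (Filter.eventually_all_finite (Set.finite_Iio k)).2 fun j hj => ?_
    refine Filter.eventually_imp_distrib_left.2 fun hij => ?_
    have hmin : ∀ᶠ q in 𝒰, t ++ [r + negT^[min i j] q] ∈ U :=
      h.2 (min i j) (min_lt_of_left_lt hi) (by simpa [or_assoc] using hij)
    simpa only [add_assoc, Set.mem_ofPred_eq] using
      h𝒰.eventually_negT_add_negT_mem (A := {q | t ++ [r + q] ∈ U}) hi.le (le_of_lt hj) hmin
  filter_upwards [hext] with p hp using ⟨h.1, hp⟩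

theorem ExtendibleAlong.eventually_append (h𝒰 : IsIdempotentUF k 𝒰)
    (hU : ∀ t ∈ U, ∀ᶠ p in 𝒰, t ++ [p] ∈ U) {l : List (ℕ → ℤ)}
    (h : ExtendibleAlong k 𝒰 U t r full l) :
    ∀ᶠ p in 𝒰, ExtendibleAlong k 𝒰 U t r full (l ++ [p]) := by
  induction l generalizing t r full with
  | nil =>
    refine (Filter.eventually_all_finite (Set.finite_Iio k)).2 fun j hj => ?_
    refine (Extendible.eventually_add h𝒰 h hj).and ?_
    refine Filter.eventually_imp_distrib_left.2 fun hf => ?_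
    filter_upwards [h.2 j hj hf] with p hp using extendible_zero_of_mem hU hp
  | cons p l ih =>
    refine (Filter.eventually_all_finite (Set.finite_Iio k)).2 fun j hj => ?_
    exact (ih (h j hj).1).and (Filter.eventually_imp_distrib_left.2 fun hf => ih ((h j hj).2 hf))

variable {ι : Type*} {P : ι → ℕ → ℤ}

theorem ExtendibleAlong.append_add_negTSum {x : ι × ℕ} {w : List (ι × ℕ)} {l : List (ℕ → ℤ)}
    (h : ExtendibleAlong k 𝒰 U t r full ((x :: w).map (fun y => P y.1) ++ l))
    (hk : ∀ y ∈ x :: w, y.2 < k) (hfull : full ∨ ∃ y ∈ x :: w, y.2 = 0) :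
    ExtendibleAlong k 𝒰 U (t ++ [r + negTSum P (x :: w)]) 0 False l := by
  induction w generalizing x r full with
  | nil => simpa [negTSum] using (h x.2 (hk x List.mem_cons_self)).2 (by simpa using hfull)
  | cons y w ih =>
    obtain ⟨hxk, hwk⟩ := List.forall_mem_cons.1 hk
    have htail := ih (h x.2 hxk).1 hwk (by simpa [or_assoc] using hfull)
    simpa [negTSum, add_assoc] using htail

theorem ExtendibleAlong.append_map_negTSum_mem {W : List (List (ι × ℕ))}
    (hW : ∀ w ∈ W, HasFullExponents k w)
    (h : ExtendibleAlong k 𝒰 U t 0 False (W.flatten.map fun x => P x.1)) :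
    t ++ W.map (negTSum P) ∈ U := by
  induction W generalizing t with
  | nil => simpa using h.1
  | cons w W ih =>
    obtain ⟨⟨hk, h₀⟩, hW'⟩ := List.forall_mem_cons.1 hW
    obtain ⟨x, v, rfl⟩ := List.exists_cons_of_ne_nil (List.ne_nil_of_mem h₀.choose_spec.1)
    rw [List.flatten_cons, List.map_append] at h
    simpa using ih hW' (h.append_add_negTSum hk (Or.inr h₀))

end Extendible

theorem exists_isBlockSeq_forall_extendibleAlong {k : ℕ} {𝒰 : Ultrafilter (ℕ → ℤ)}
    (hcof : IsCofiniteUF k 𝒰) (hidem : IsIdempotentUF k 𝒰) {U : Set (List (ℕ → ℤ))}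
    (hnil : [] ∈ U) (hU : ∀ t ∈ U, ∀ᶠ p in 𝒰, t ++ [p] ∈ U) :
    ∃ P : ℕ → ℕ → ℤ, IsBlockSeq k P ∧
      ∀ l : List ℕ, l.Pairwise (· < ·) → ExtendibleAlong k 𝒰 U [] 0 False (l.map P) := by
  obtain ⟨P, hP⟩ := exists_seq_forall_pairwise_lt_map_mem (F := (𝒰 : Filter (ℕ → ℤ)))
    (V := {l | IsFinBlockSeq k l ∧ ExtendibleAlong k 𝒰 U [] 0 False l})
    ⟨by simp [IsFinBlockSeq], extendible_zero_of_mem hU hnil⟩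
    fun l ⟨hblock, hext⟩ =>
      (hcof.eventually_isFinBlockSeq_append hblock).and (hext.eventually_append hidem hU)
  refine ⟨P, ⟨fun n => ?_, fun m n hmn => ?_⟩, fun l hl => (hP l hl).2⟩
  · exact (hP [n] (List.pairwise_singleton _ _)).1.1 _ (by simp)
  · simpa using (hP [m, n] (by simpa using hmn)).1.2

theorem IsBlockSeq.pairwise_lt_flatten_ofFn {k : ℕ} {P Q : ℕ → ℕ → ℤ} (hP : IsBlockSeq k P)
    (hQ : IsBlockSeq k Q) {w : ℕ → List (ℕ × ℕ)}
    (hw : ∀ n, ((w n).map Prod.fst).Pairwise (· < ·)) (hwk : ∀ n, ∀ x ∈ w n, x.2 < k)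
    (hQw : ∀ n, Q n = negTSum P (w n)) (N : ℕ) :
    ((List.ofFn fun i : Fin N => w i).flatten.map Prod.fst).Pairwise (· < ·) := by
  rw [List.pairwise_map, List.pairwise_flatten, List.forall_mem_ofFn_iff, List.pairwise_ofFn]
  refine ⟨fun i => List.pairwise_map.1 (hw i), fun i j hij x hx y hy => ?_⟩
  have hlt : BlockLt (negTSum P (w i)) (negTSum P (w j)) := hQw i ▸ hQw j ▸ hQ.2 i j hij
  exact hP.lt_of_blockLt_negTSum (hw i).nodup (hw j).nodup hlt hx hy (hwk i x hx) (hwk j y hy)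

theorem UTree_block_sequence_general {k : ℕ} {𝒰 : Ultrafilter (ℕ → ℤ)}
    (hcof : IsCofiniteUF k 𝒰) (hidem : IsIdempotentUF k 𝒰) {U : Set (List (ℕ → ℤ))}
    (hU : IsUTree k 𝒰 U []) :
    ∃ P : ℕ → ℕ → ℤ, IsBlockSeq k P ∧
      ∀ Q : ℕ → ℕ → ℤ, IsBlockSeq k Q → (∀ n, InSpanNegT k P (Q n)) → Q ∈ Branches U := by
  have hbranch : ∀ t ∈ U, ∀ᶠ p in 𝒰, t ++ [p] ∈ U := fun t ht => hU.branch t ht List.nil_prefix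
  obtain ⟨P, hP, hext⟩ :=
    exists_isBlockSeq_forall_extendibleAlong hcof hidem hU.stemMem hbranch
  refine ⟨P, hP, fun Q hQ hspan N => ?_⟩
  choose w hw hfull hQw using fun n => (hspan n).exists_list
  have hsorted := hP.pairwise_lt_flatten_ofFn hQ hw (fun n => (hfull n).1) hQw N
  have halong := hext _ hsorted
  rw [List.map_map] at halong
  have hmem := ExtendibleAlong.append_map_negTSum_mem
    (List.forall_mem_ofFn_iff.2 fun i : Fin N => hfull i) halong
  simpa [List.map_ofFn, Function.comp_def, ← hQw] using hmem

/-- for any `𝒰`-tree `U` with stem `∅` there is an infinite block sequence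
`P` such that every infinite block sequence `Q ≤_{(−T)} P` belongs to `[U]`. -/
theorem UTree_block_sequence (k : ℕ) (hk : 1 ≤ k) (𝒰 : Ultrafilter (ℕ → ℤ))
    (h𝒰 : IsGowersUF k 𝒰) (U : Set (List (ℕ → ℤ))) (hU : IsUTree k 𝒰 U []) :
    ∃ P : ℕ → ℕ → ℤ, IsBlockSeq k P ∧
      ∀ Q : ℕ → ℕ → ℤ, IsBlockSeq k Q → (∀ n, InSpanNegT k P (Q n)) →
        Q ∈ Branches U := by
  exact UTree_block_sequence_general h𝒰.1 h𝒰.2.2 hU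
end
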